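/- Let X = [x_1 … x_N] ∈ ℝ^{n×N} have nonzero columns and let α ∈ (0,1]. Then ρ_α(X) ≤ min(1, λ_min(X̃X̃ᵀ)/(N α²)), where λ_min(X̃X̃ᵀ) is the smallest eigenvalue of X̃X̃ᵀ and X̃ is the column-normalized version of X. -/

import Mathlib

/-!
For a unit eigenvector `η` of `X̃X̃ᵀ` with eigenvalue `μ` one has
`∑ t, (x̃_tᵀη)² = ηᵀX̃X̃ᵀη = μ`. Every index in `𝓘_α(X,η)` contributes at least `α²` to this sum of
squares, so `|𝓘_α(X,η)| α² ≤ μ`. Taking `μ` minimal bounds the infimum that defines `ρ_α(X)`.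
The bound by `1` is `|𝓘_α(X,η)| ≤ N`.
-/


open scoped BigOperators

noncomputable section

/-- Euclidean dot product on `ℝⁿ`. -/
def dotR {n : ℕ} (u v : Fin n → ℝ) : ℝ := ∑ i, u i * v i

/-- Euclidean 2-norm on `ℝⁿ`. -/
def nrm {n : ℕ} (v : Fin n → ℝ) : ℝ := Real.sqrt (∑ i, v i ^ 2)

/-- Normalized columns: `x̃_t = x_t / ‖x_t‖₂`. -/
def ntild {n N : ℕ} (x : Fin N → Fin n → ℝ) (t : Fin N) : Fin n → ℝ :=
  (nrm (x t))⁻¹ • x t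

/-- The index set `𝓘_α(X,η) = {t : |x_tᵀη| ≥ α‖x_t‖₂‖η‖₂}`. -/
def Iset {n N : ℕ} (x : Fin N → Fin n → ℝ) (a : ℝ) (η : Fin n → ℝ) : Finset (Fin N) :=
  Finset.univ.filter fun t => a * nrm (x t) * nrm η ≤ |dotR (x t) η|

/-- The correlation measure `ρ_α(X) = (1/N)·inf_{η ≠ 0} |𝓘_α(X,η)|`. -/
def rhoX {n N : ℕ} (x : Fin N → Fin n → ℝ) (a : ℝ) : ℝ :=
  (1 / N) * sInf ((fun η : Fin n → ℝ => ((Iset x a η).card : ℝ)) '' {η | η ≠ 0})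

/-- The matrix `X̃` of normalized regressors. -/
def XtMat {n N : ℕ} (x : Fin N → Fin n → ℝ) : Matrix (Fin n) (Fin N) ℝ :=
  Matrix.of fun i t => ntild x t i

lemma rhoX_le_of_ne_zero {n N : ℕ} (x : Fin N → Fin n → ℝ) (a : ℝ) {η : Fin n → ℝ}
    (hη : η ≠ 0) : rhoX x a ≤ ((Iset x a η).card : ℝ) / N := by
  have h : sInf ((fun η : Fin n → ℝ => ((Iset x a η).card : ℝ)) '' {η | η ≠ 0}) ≤
      ((Iset x a η).card : ℝ) := by
    apply csInf_le
    · refine ⟨0, ?_⟩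
      rintro _ ⟨ζ, -, rfl⟩
      positivity
    · exact ⟨η, hη, rfl⟩
  unfold rhoX
  rw [one_div, div_eq_inv_mul]
  gcongr

lemma nrm_pos {n : ℕ} {v : Fin n → ℝ} (hv : v ≠ 0) : 0 < nrm v := by
  obtain ⟨i, hi⟩ := Function.ne_iff.mp hv
  refine Real.sqrt_pos.mpr (Finset.sum_pos' (fun j _ => sq_nonneg _) ⟨i, Finset.mem_univ i, ?_⟩)
  have : v i ≠ 0 := hi
  positivity

lemma sq_le_of_mem_Iset {n N : ℕ} {x : Fin N → Fin n → ℝ} {a : ℝ} (ha : 0 ≤ a)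
    {η : Fin n → ℝ} (hη : nrm η = 1) {t : Fin N} (hx : x t ≠ 0) (ht : t ∈ Iset x a η) :
    a ^ 2 ≤ dotR (ntild x t) η ^ 2 := by
  have hp := nrm_pos hx
  have h : a * nrm (x t) ≤ |dotR (x t) η| := by simpa [Iset, hη] using ht
  have hd : dotR (ntild x t) η = dotR (x t) η / nrm (x t) := by
    simp only [dotR, ntild, Pi.smul_apply, smul_eq_mul, Finset.sum_div]
    exact Finset.sum_congr rfl fun i _ => by ring
  rw [← sq_abs (dotR _ _), hd, abs_div, abs_of_pos hp]
  gcongr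
  rwa [le_div_iff₀ hp]

/-- The quadratic form of the Gram matrix `X̃X̃ᵀ`. -/
lemma dotProduct_gram {n N : ℕ} (x : Fin N → Fin n → ℝ) (η : Fin n → ℝ) :
    η ⬝ᵥ ((XtMat x * (XtMat x).conjTranspose).mulVec η) = ∑ t, dotR (ntild x t) η ^ 2 := by
  rw [← Matrix.mulVec_mulVec, Matrix.dotProduct_mulVec]
  simp only [dotProduct, Matrix.vecMul, Matrix.mulVec, XtMat, Matrix.of_apply,
    Matrix.conjTranspose_apply, star_trivial, dotR, sq]
  exact Finset.sum_congr rfl fun t _ => by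
    congr 1
    exact Finset.sum_congr rfl fun i _ => mul_comm _ _

/-- `ρ_α(X) ≤ min(1, λ_min(X̃X̃ᵀ)/(Nα²))`. -/
theorem rhoX_upper_bound {n N : ℕ} (hN : 0 < N)
    (x : Fin N → Fin n → ℝ) (hx : ∀ t, x t ≠ 0)
    (a : ℝ) (ha : 0 < a) (ha1 : a ≤ 1) :
    rhoX x a ≤
      min 1
        ((⨅ i, (Matrix.isHermitian_mul_conjTranspose_self (XtMat x)).eigenvalues i) /
          (N * a ^ 2)) := by
  have hN' : (0 : ℝ) < N := by exact_mod_cast hN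
  refine le_min ?_ ?_
  · refine (rhoX_le_of_ne_zero x a (hx ⟨0, hN⟩)).trans ?_
    rw [div_le_one hN']
    exact_mod_cast (Finset.card_le_univ _).trans_eq (Fintype.card_fin N)
  -- A nonzero vector exists in `ℝⁿ`, so `0 < n` and the infimum of eigenvalues is attained.
  have : Nonempty (Fin n) := (Function.ne_iff.mp (hx ⟨0, hN⟩)).nonempty
  set hA := Matrix.isHermitian_mul_conjTranspose_self (XtMat x)
  obtain ⟨i, hi⟩ := exists_eq_ciInf_of_finite (f := hA.eigenvalues)
  rw [← hi]
  set η : Fin n → ℝ := (hA.eigenvectorBasis i).ofLp with hη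
  have hnorm : nrm η = 1 := by
    have h := hA.eigenvectorBasis.orthonormal.1 i
    rw [EuclideanSpace.norm_eq] at h
    simpa [nrm, hη] using h
  have hsq : ∑ j, η j ^ 2 = 1 := by
    simpa [nrm, Real.sqrt_eq_one] using hnorm
  have hη0 : η ≠ 0 := by
    intro h
    simp [h] at hsq
  have hsum : ∑ t, dotR (ntild x t) η ^ 2 = hA.eigenvalues i := by
    rw [← dotProduct_gram, hη, hA.mulVec_eigenvectorBasis i, dotProduct_smul, ← hη]
    simp [dotProduct, ← sq, hsq]
  have hcard : ((Iset x a η).card : ℝ) * a ^ 2 ≤ hA.eigenvalues i := by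
    rw [← hsum, ← nsmul_eq_mul]
    refine (Finset.card_nsmul_le_sum _ _ _
      fun t ht => sq_le_of_mem_Iset ha.le hnorm (hx t) ht).trans ?_
    exact Finset.sum_le_univ_sum_of_nonneg fun t => sq_nonneg _
  refine (rhoX_le_of_ne_zero x a hη0).trans ?_
  rw [div_le_div_iff₀ hN' (by positivity)]
  nlinarith
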